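/- arXiv:2510.02087 — 4 statements merged into one kernel-verified Lean document; each statement's English description precedes it below -/
import Mathlib

section
/- Let ζ, ξ, α, β, κ > 0 satisfy ακ < 1 and βκ > 1, and let V : [0, ∞) → ℝ be differentiable with V(t) ≥ 0 for all t and V′(t) ≤ −(ζ V(t)^α + ξ V(t)^β)^κ for all t ≥ 0. Then V(t) = 0 for every t ≥ T, where T := 1/(ζ^κ (1 − ακ)) + 1/(ξ^κ (βκ − 1)). (Fixed-time attractivity with a settling-time bound independent of V(0).) -/
/-!
The right-hand side of the differential inequality dominates each of its two summands, so
`V' ≤ -ξ^κ V^(βκ)` and `V' ≤ -ζ^κ V^(ακ)`. Wherever `V > 0`, an inequality `V' ≤ -c V^r` with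
`r ≠ 1` says that `V^(1-r)/(1-r)` decreases at rate at least `c`
(`rpow_div_add_mul_le_of_deriv_le`).

Suppose `V t > 0` for some `t ≥ T`. As `V` is nonincreasing, it is positive on `[0, t]`. Let
`t₁ = 1/(ξ^κ(βκ-1))`. The exponent `r = βκ > 1` on `[0, t₁]` gives
`V(t₁)^(1-βκ) ≥ V(0)^(1-βκ) + 1 > 1`, so `V(t₁) < 1` whatever the value of `V(0)`. The exponent
`r = ακ < 1` on `[t₁, t]` then gives `V(t)^(1-ακ) < 1 - ζ^κ(1-ακ)(t-t₁) ≤ 0`, a contradiction.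
-/

/-- Separation of variables for `V' ≤ -c V^r` with `r = 1 - s`. Dividing by `s` makes the
conclusion uniform in the sign of `s`. -/
lemma rpow_div_add_mul_le_of_deriv_le {V : ℝ → ℝ} {a b c s : ℝ} (hab : a ≤ b) (hs : s ≠ 0)
    (hdiff : ∀ t ∈ Set.Icc a b, DifferentiableAt ℝ V t)
    (hpos : ∀ t ∈ Set.Icc a b, 0 < V t)
    (hineq : ∀ t ∈ Set.Icc a b, deriv V t ≤ -(c * V t ^ (1 - s))) :
    V b ^ s / s + c * (b - a) ≤ V a ^ s / s := by
  have hd : ∀ t ∈ Set.Icc a b,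
      HasDerivAt (fun u => V u ^ s / s) (deriv V t * V t ^ (s - 1)) t := fun t ht => by
    have h := ((hdiff t ht).hasDerivAt.rpow_const (p := s) (Or.inl (hpos t ht).ne')).div_const s
    have e : deriv V t * s * V t ^ (s - 1) / s = deriv V t * V t ^ (s - 1) := by field_simp
    rwa [e] at h
  have h := (convex_Icc a b).image_sub_le_mul_sub_of_deriv_le (C := -c)
    (fun t ht => (hd t ht).continuousAt.continuousWithinAt)
    (fun t ht => (hd t (interior_subset ht)).differentiableAt.differentiableWithinAt)
    (fun t ht => by
      have ht := interior_subset ht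
      rw [(hd t ht).deriv]
      have h1 : V t ^ (1 - s) * V t ^ (s - 1) = 1 := by
        rw [← Real.rpow_add (hpos t ht)]; simp
      have h2 := mul_le_mul_of_nonneg_right (hineq t ht)
        (Real.rpow_nonneg (hpos t ht).le (s - 1))
      linear_combination h2 - c * h1)
    a (Set.left_mem_Icc.2 hab) b (Set.right_mem_Icc.2 hab) hab
  linarith

theorem fixed_time_attractivity
    (ζ ξ α β κ : ℝ)
    (hζ : 0 < ζ) (hξ : 0 < ξ) (hα : 0 < α) (hβ : 0 < β) (hκ : 0 < κ)
    (hακ : α * κ < 1) (hβκ : 1 < β * κ)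
    (V : ℝ → ℝ)
    (hdiff : ∀ t, 0 ≤ t → DifferentiableAt ℝ V t)
    (hnonneg : ∀ t, 0 ≤ t → 0 ≤ V t)
    (hineq : ∀ t, 0 ≤ t → deriv V t ≤ -(ζ * V t ^ α + ξ * V t ^ β) ^ κ) :
    ∀ t, 1 / (ζ ^ κ * (1 - α * κ)) + 1 / (ξ ^ κ * (β * κ - 1)) ≤ t → V t = 0 := by
  intro t hT
  have hA : 0 < ζ ^ κ := Real.rpow_pos_of_pos hζ κ
  have hB : 0 < ξ ^ κ := Real.rpow_pos_of_pos hξ κ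
  have hp : 0 < 1 - α * κ := by linarith
  have hq : 0 < β * κ - 1 := by linarith
  have hineq1 : ∀ u, 0 ≤ u → deriv V u ≤ -(ζ ^ κ * V u ^ (1 - (1 - α * κ))) := fun u hu => by
    have hV := hnonneg u hu
    refine (hineq u hu).trans (neg_le_neg ?_)
    rw [sub_sub_cancel, Real.rpow_mul hV, ← Real.mul_rpow hζ.le (by positivity)]
    exact Real.rpow_le_rpow (by positivity) (le_add_of_nonneg_right (by positivity)) hκ.le
  have hineq2 : ∀ u, 0 ≤ u → deriv V u ≤ -(ξ ^ κ * V u ^ (1 - (1 - β * κ))) := fun u hu => by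
    have hV := hnonneg u hu
    refine (hineq u hu).trans (neg_le_neg ?_)
    rw [sub_sub_cancel, Real.rpow_mul hV, ← Real.mul_rpow hξ.le (by positivity)]
    exact Real.rpow_le_rpow (by positivity) (le_add_of_nonneg_left (by positivity)) hκ.le
  have hanti : AntitoneOn V (Set.Ici 0) :=
    antitoneOn_of_deriv_nonpos (convex_Ici 0)
      (fun u hu => (hdiff u hu).continuousAt.continuousWithinAt)
      (fun u hu => (hdiff u (interior_subset hu)).differentiableWithinAt)
      (fun u hu => by
        have hu : 0 ≤ u := interior_subset hu
        have hV := hnonneg u hu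
        refine (hineq u hu).trans (neg_nonpos.2 ?_)
        positivity)
  set t₁ := 1 / (ξ ^ κ * (β * κ - 1)) with ht₁
  have h0 : 0 < t₁ := by positivity
  have h2 : 0 < 1 / (ζ ^ κ * (1 - α * κ)) := by positivity
  have htt : t₁ ≤ t := by linarith
  by_contra hne
  have hVt : 0 < V t := (hnonneg t (by linarith)).lt_of_ne' hne
  have hpos : ∀ u, 0 ≤ u → u ≤ t → 0 < V u := fun u hu hut =>
    hVt.trans_le (hanti hu (hu.trans hut) hut)
  have hV1 : V t₁ < 1 := by
    have h := rpow_div_add_mul_le_of_deriv_le (s := 1 - β * κ) h0.le (by linarith)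
      (fun u hu => hdiff u hu.1) (fun u hu => hpos u hu.1 (hu.2.trans htt))
      (fun u hu => hineq2 u hu.1)
    have hW0 := Real.rpow_pos_of_pos (hpos 0 le_rfl (by linarith)) (1 - β * κ)
    have e : ξ ^ κ * (t₁ - 0) * (β * κ - 1) = 1 := by rw [ht₁]; field_simp; ring
    have hW : 1 < V t₁ ^ (1 - β * κ) := by
      have h' := mul_le_mul_of_nonneg_right h hq.le
      have d : ∀ x : ℝ, x / (1 - β * κ) * (β * κ - 1) = -x := fun x => by
        have : 1 - β * κ ≠ 0 := by linarith
        field_simp; ring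
      rw [add_mul, d, d, e] at h'
      linarith
    by_contra! hge
    exact absurd (Real.rpow_le_one_of_one_le_of_nonpos hge (by linarith)) (not_le.2 hW)
  have h := rpow_div_add_mul_le_of_deriv_le (s := 1 - α * κ) htt hp.ne'
    (fun u hu => hdiff u (h0.le.trans hu.1)) (fun u hu => hpos u (h0.le.trans hu.1) hu.2)
    (fun u hu => hineq1 u (h0.le.trans hu.1))
  have hU1 : V t₁ ^ (1 - α * κ) / (1 - α * κ) < 1 / (1 - α * κ) :=
    div_lt_div_of_pos_right (Real.rpow_lt_one (hpos t₁ h0.le htt).le hV1 hp) hp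
  have hUt : 0 < V t ^ (1 - α * κ) / (1 - α * κ) := div_pos (Real.rpow_pos_of_pos hVt _) hp
  have hrate : 1 / (1 - α * κ) ≤ ζ ^ κ * (t - t₁) := by
    calc 1 / (1 - α * κ) = ζ ^ κ * (1 / (ζ ^ κ * (1 - α * κ))) := by field_simp
      _ ≤ _ := mul_le_mul_of_nonneg_left (by linarith) hA.le
  linarith
end

section
/- Under the stated evader–pursuer engagement kinematics, suppose the evader applies the control law a_E = −2 ṙ λ̇ / cos(γ_E − λ) + (r / cos(γ_E − λ)) [ (ζ₁ |λ̇|^{α₁} + ξ₁ |λ̇|^{β₁})^{κ₁} + sec(γ_E − λ) ε₁ ] sign(λ̇), where ζ₁, ξ₁, α₁, β₁, κ₁, ε₁ > 0. Suppose further that at time t one has 0 < cos(γ_E(t) − λ(t)), λ̇(t) ≠ 0, |a_P(t)| ≤ A, and ε₁ ≥ A / r(t). Then the function V₁ = |λ̇| satisfies V₁′(t) ≤ −(ζ₁ |λ̇(t)|^{α₁} + ξ₁ |λ̇(t)|^{β₁})^{κ₁}. (Key inequality in the proof of Theorem 1.) -/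
/-! Differentiating the identity `r λ̇ = v_P sin(γ_P − λ) − v_E sin(γ_E − λ)` and substituting the
equation for `ṙ` gives `r λ̈ = −2 ṙ λ̇ + cos(γ_P − λ) a_P − cos(γ_E − λ) a_E`. The control law cancels
`−2 ṙ λ̇`, leaving `r λ̈ = cos(γ_P − λ) a_P − r (F + ε₁ sec(γ_E − λ)) sign λ̇`, where `F` is the claimed
decay rate. Hence `V₁′ = sign(λ̇) λ̈ ≤ A / r − F − ε₁ sec(γ_E − λ) ≤ −F`, because the secant is at
least one. -/

/-- The second-order line-of-sight dynamics, before any control law is substituted. -/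
theorem los_dynamics (r lam γE γP aE aP : ℝ → ℝ) (vE vP : ℝ) (hvE : 0 < vE) (hvP : 0 < vP)
    (hr : Differentiable ℝ r) (hlam : Differentiable ℝ lam)
    (hlam' : Differentiable ℝ (deriv lam))
    (hγE : Differentiable ℝ γE) (hγP : Differentiable ℝ γP)
    (hkin_r : ∀ s, deriv r s =
      vP * Real.cos (γP s - lam s) - vE * Real.cos (γE s - lam s))
    (hkin_lam : ∀ s, r s * deriv lam s =
      vP * Real.sin (γP s - lam s) - vE * Real.sin (γE s - lam s))
    (hdynE : ∀ s, deriv γE s = aE s / vE)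
    (hdynP : ∀ s, deriv γP s = aP s / vP) (t : ℝ) :
    r t * deriv (deriv lam) t = -2 * deriv r t * deriv lam t +
      Real.cos (γP t - lam t) * aP t - Real.cos (γE t - lam t) * aE t := by
  have h1 : HasDerivAt (fun s => r s * deriv lam s) _ t :=
    (hr t).hasDerivAt.mul (hlam' t).hasDerivAt
  have h2 : HasDerivAt
      (fun s => vP * Real.sin (γP s - lam s) - vE * Real.sin (γE s - lam s)) _ t :=
    ((((hγP t).hasDerivAt.sub (hlam t).hasDerivAt).sin).const_mul vP).sub
      ((((hγE t).hasDerivAt.sub (hlam t).hasDerivAt).sin).const_mul vE)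
  rw [funext hkin_lam] at h1
  have h := h1.unique h2
  have hE : vE * deriv γE t = aE t := by rw [hdynE]; field_simp
  have hP : vP * deriv γP t = aP t := by rw [hdynP]; field_simp
  simp only [Pi.sub_apply] at h
  rw [← hE, ← hP]
  linear_combination h + deriv lam t * hkin_r t

/- Key inequality in the proof of Theorem 1: under the evader's control law,
V₁ = |λ̇| satisfies V₁′(t) ≤ −(ζ₁ |λ̇(t)|^{α₁} + ξ₁ |λ̇(t)|^{β₁})^{κ₁}
whenever cos(γ_E(t) − λ(t)) > 0, λ̇(t) ≠ 0, |a_P(t)| ≤ A and ε₁ ≥ A / r(t). -/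
theorem evader_lyapunov_decrease
    (r lam γE γP aE aP : ℝ → ℝ) (vE vP A ζ₁ ξ₁ α₁ β₁ κ₁ ε₁ : ℝ)
    (hrpos : ∀ s, 0 < r s) (hvE : 0 < vE) (hvP : 0 < vP) (hA : 0 < A)
    (hζ : 0 < ζ₁) (hξ : 0 < ξ₁) (hα : 0 < α₁) (hβ : 0 < β₁) (hκ : 0 < κ₁)
    (hε : 0 < ε₁)
    (hr : Differentiable ℝ r) (hlam : Differentiable ℝ lam)
    (hlam' : Differentiable ℝ (deriv lam))
    (hγE : Differentiable ℝ γE) (hγP : Differentiable ℝ γP)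
    (hkin_r : ∀ s, deriv r s =
      vP * Real.cos (γP s - lam s) - vE * Real.cos (γE s - lam s))
    (hkin_lam : ∀ s, r s * deriv lam s =
      vP * Real.sin (γP s - lam s) - vE * Real.sin (γE s - lam s))
    (hdynE : ∀ s, deriv γE s = aE s / vE)
    (hdynP : ∀ s, deriv γP s = aP s / vP)
    (hlaw : ∀ s, aE s =
      -2 * deriv r s * deriv lam s / Real.cos (γE s - lam s) +
        (r s / Real.cos (γE s - lam s)) *
          (((ζ₁ * |deriv lam s| ^ α₁ + ξ₁ * |deriv lam s| ^ β₁) ^ κ₁ +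
              ε₁ / Real.cos (γE s - lam s)) * Real.sign (deriv lam s)))
    (t : ℝ)
    (hcos : 0 < Real.cos (γE t - lam t))
    (hlamdot : deriv lam t ≠ 0)
    (haP : |aP t| ≤ A)
    (hεbound : A / r t ≤ ε₁) :
    deriv (fun s => |deriv lam s|) t ≤
      -(ζ₁ * |deriv lam t| ^ α₁ + ξ₁ * |deriv lam t| ^ β₁) ^ κ₁ := by
  have hr0 := hrpos t
  have hlos := los_dynamics r lam γE γP aE aP vE vP hvE hvP hr hlam hlam' hγE hγP
    hkin_r hkin_lam hdynE hdynP t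
  have hlaw_t := hlaw t
  set F := (ζ₁ * |deriv lam t| ^ α₁ + ξ₁ * |deriv lam t| ^ β₁) ^ κ₁
  set c := Real.cos (γE t - lam t)
  set p := Real.cos (γP t - lam t)
  have hc1 : c ≤ 1 := Real.cos_le_one _
  have hcos_aE : c * aE t = -2 * deriv r t * deriv lam t +
      r t * ((F + ε₁ / c) * Real.sign (deriv lam t)) := by
    rw [hlaw_t]; field_simp
  have hclosed : r t * deriv (deriv lam) t =
      p * aP t - r t * ((F + ε₁ / c) * Real.sign (deriv lam t)) := by
    linarith
  have hpa : |p * aP t| ≤ A := by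
    rw [abs_mul]
    exact (mul_le_of_le_one_left (abs_nonneg _) (Real.abs_cos_le_one _)).trans haP
  have hεr : A ≤ r t * ε₁ := by
    rw [div_le_iff₀ hr0] at hεbound; linarith
  have hsec : r t * ε₁ ≤ r t * (ε₁ / c) :=
    mul_le_mul_of_nonneg_left (le_div_self hε.le hcos hc1) hr0.le
  have hd := (hlam' t).hasDerivAt
  obtain ⟨hpa1, hpa2⟩ := abs_le.mp hpa
  refine le_of_mul_le_mul_left ?_ hr0
  rcases lt_or_gt_of_ne hlamdot with h | h
  · have hV : deriv (fun s => |deriv lam s|) t = -deriv (deriv lam) t :=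
      (((hasDerivAt_abs_neg h).comp t hd).congr_deriv (by ring)).deriv
    rw [Real.sign_of_neg h] at hclosed
    rw [hV]
    linarith
  · have hV : deriv (fun s => |deriv lam s|) t = deriv (deriv lam) t :=
      (((hasDerivAt_abs_pos h).comp t hd).congr_deriv (by ring)).deriv
    rw [Real.sign_of_pos h] at hclosed
    rw [hV]
    linarith
end

section
/- Under the stated defender–pursuer engagement kinematics, let c be a real constant, set D := ṙ² + r² λ̇² + 2 c ṙ, assume D(t) ≠ 0, and define the true-proportional-navigation time-to-go t_go^{DP} := −r (ṙ + 2c) / D. Then d t_go^{DP}/dt = −1 + 2 c r² (ṙ + 2c) λ̇² / D² − 2 r² λ̇ (ṙ + 2c) a_D / D² + (r a_P / D²) [ r λ̇ (v_P − v_D cos(γ_P − γ_D)) − 4 c² sin(γ_P − λ) + (4c + ṙ) v_D sin(γ_P − γ_D) ]. -/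
/-!
Resolve all velocities along and across the line of sight. With `u = ṙ` and `w = r λ̇`, the
kinematics say that `(u, w)` is the pursuer velocity minus the defender velocity in the rotating
frame. The defender's acceleration is purely transverse in that frame, hence
`u̇ = w λ̇ - a_P sin (γ_P - λ)` and `ẇ = -u λ̇ + a_P cos (γ_P - λ) - a_D`.

Since `D = u ^ 2 + w ^ 2 + 2 c u`, the numerator `N = r (u + 2 c)` satisfies
`Ṅ = D - r a_P sin (γ_P - λ)`, and the quotient rule gives the `-1`, the `c`-term and the
`a_D`-term directly. The bracket multiplying `a_P` is rewritten with
`v_D sin (γ_P - γ_D) = w cos (γ_P - λ) - u sin (γ_P - λ)` and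
`v_P - v_D cos (γ_P - γ_D) = u cos (γ_P - λ) + w sin (γ_P - λ)`, which come from eliminating the
defender's velocity components.
-/


/- Derivative of the true-proportional-navigation time-to-go for the defender–pursuer
engagement, t_go^{DP} = −r(ṙ + 2c)/D with D = ṙ² + r²λ̇² + 2cṙ (equation (18)). -/
theorem tgoDP_derivative
    (r lam γD γP vD aP aD : ℝ → ℝ) (vP c : ℝ)
    (hrpos : ∀ t, 0 < r t) (hvDpos : ∀ t, 0 < vD t) (hvP : 0 < vP)
    (hr : Differentiable ℝ r) (hlam : Differentiable ℝ lam)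
    (hr' : Differentiable ℝ (deriv r)) (hlam' : Differentiable ℝ (deriv lam))
    (hγD : Differentiable ℝ γD) (hγP : Differentiable ℝ γP)
    (hvD : Differentiable ℝ vD)
    (hkin_r : ∀ t, deriv r t =
      vP * Real.cos (γP t - lam t) - vD t * Real.cos (γD t - lam t))
    (hkin_lam : ∀ t, r t * deriv lam t =
      vP * Real.sin (γP t - lam t) - vD t * Real.sin (γD t - lam t))
    (hdynP : ∀ t, deriv γP t = aP t / vP)
    (hdynD : ∀ t, deriv γD t = aD t * Real.cos (γD t - lam t) / vD t)
    (hdynvD : ∀ t, deriv vD t = aD t * Real.sin (γD t - lam t))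
    (D tgo : ℝ → ℝ)
    (hD : ∀ t, D t =
      (deriv r t) ^ 2 + (r t) ^ 2 * (deriv lam t) ^ 2 + 2 * c * deriv r t)
    (hDne : ∀ t, D t ≠ 0)
    (htgo : ∀ t, tgo t = -(r t * (deriv r t + 2 * c)) / D t) :
    ∀ t, deriv tgo t =
      -1 + 2 * c * (r t) ^ 2 * (deriv r t + 2 * c) * (deriv lam t) ^ 2 / (D t) ^ 2
        - 2 * (r t) ^ 2 * deriv lam t * (deriv r t + 2 * c) * aD t / (D t) ^ 2
        + (r t * aP t / (D t) ^ 2) *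
            (r t * deriv lam t * (vP - vD t * Real.cos (γP t - γD t))
              - 4 * c ^ 2 * Real.sin (γP t - lam t)
              + (4 * c + deriv r t) * vD t * Real.sin (γP t - γD t)) := by
  intro t
  have hvP0 : vP ≠ 0 := hvP.ne'
  have hvD0 : vD t ≠ 0 := (hvDpos t).ne'
  have dP : HasDerivAt (fun s => γP s - lam s) (aP t / vP - deriv lam t) t := by
    have h := (hγP t).hasDerivAt
    rw [hdynP t] at h
    exact h.sub (hlam t).hasDerivAt
  have dQ : HasDerivAt (fun s => γD s - lam s)
      (aD t * Real.cos (γD t - lam t) / vD t - deriv lam t) t := by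
    have h := (hγD t).hasDerivAt
    rw [hdynD t] at h
    exact h.sub (hlam t).hasDerivAt
  have dv : HasDerivAt vD (aD t * Real.sin (γD t - lam t)) t := by
    have h := (hvD t).hasDerivAt
    rwa [hdynvD t] at h
  have hcsQ := Real.sin_sq_add_cos_sq (γD t - lam t)
  have hcsP := Real.sin_sq_add_cos_sq (γP t - lam t)
  have du : HasDerivAt (deriv r)
      (r t * deriv lam t * deriv lam t - aP t * Real.sin (γP t - lam t)) t := by
    rw [show deriv r = fun s => vP * Real.cos (γP s - lam s) - vD s * Real.cos (γD s - lam s)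
      from funext hkin_r, hkin_lam t]
    refine ((dP.cos.const_mul vP).sub (dv.mul dQ.cos)).congr_deriv ?_
    field_simp
    ring
  have dw : HasDerivAt (fun s => r s * deriv lam s)
      (-(deriv r t) * deriv lam t + aP t * Real.cos (γP t - lam t) - aD t) t := by
    rw [show (fun s => r s * deriv lam s) =
      fun s => vP * Real.sin (γP s - lam s) - vD s * Real.sin (γD s - lam s)
      from funext hkin_lam, hkin_r t]
    refine ((dP.sin.const_mul vP).sub (dv.mul dQ.sin)).congr_deriv ?_
    field_simp
    linear_combination (-aD t) * hcsQ
  have dD : HasDerivAt D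
      (2 * deriv r t * (r t * deriv lam t * deriv lam t - aP t * Real.sin (γP t - lam t))
        + 2 * (r t * deriv lam t)
          * (-(deriv r t) * deriv lam t + aP t * Real.cos (γP t - lam t) - aD t)
        + 2 * c * (r t * deriv lam t * deriv lam t - aP t * Real.sin (γP t - lam t))) t := by
    rw [show D = fun s => (deriv r s) ^ 2 + (r s * deriv lam s) ^ 2 + 2 * c * deriv r s
      from funext fun s => by rw [hD s]; ring]
    refine (((du.pow 2).add (dw.pow 2)).add (du.const_mul (2 * c))).congr_deriv ?_
    push_cast
    ring
  have dT := ((((hr t).hasDerivAt.mul (du.add_const (2 * c))).neg).div dD (hDne t))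
  have hT : tgo = fun s => -(r s * (deriv r s + 2 * c)) / D s := funext htgo
  have hsin : vD t * Real.sin (γP t - γD t) =
      r t * deriv lam t * Real.cos (γP t - lam t) - deriv r t * Real.sin (γP t - lam t) := by
    rw [show γP t - γD t = (γP t - lam t) - (γD t - lam t) by ring, Real.sin_sub,
      hkin_lam t, hkin_r t]
    ring
  have hcos : vP - vD t * Real.cos (γP t - γD t) =
      deriv r t * Real.cos (γP t - lam t) + r t * deriv lam t * Real.sin (γP t - lam t) := by
    rw [show γP t - γD t = (γP t - lam t) - (γD t - lam t) by ring, Real.cos_sub,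
      hkin_lam t, hkin_r t]
    linear_combination (-vP) * hcsP
  rw [hT]
  refine (HasDerivAt.deriv dT).trans ?_
  rw [hcos, mul_assoc (4 * c + deriv r t), hsin]
  have hDt := hDne t
  -- `-1` is put over `D ^ 2`, so that only the identity of numerators remains, where `D` is
  -- replaced by its definition.
  have h1 : (-1 : ℝ) = -(D t) ^ 2 / (D t) ^ 2 := by field_simp
  rw [h1]
  field_simp
  simp only [Pi.mul_apply, Pi.neg_apply, Pi.add_apply]
  rw [hD t]
  ring
end

section
/- Consider simultaneously the evader–pursuer and defender–pursuer engagement kinematics as stated, let c and τ be real constants, set D := ṙ_{DP}² + r_{DP}² λ̇_{DP}² + 2c ṙ_{DP}, t_go^{DP} := −r_{DP}(ṙ_{DP} + 2c)/D, t_go^{EP} := −r_{EP}/ṙ_{EP}, and s₂ := t_go^{DP} − t_go^{EP} + τ. Suppose ṙ_{EP} ≠ 0, λ̇_{DP} ≠ 0, ṙ_{DP} + 2c ≠ 0, D ≠ 0, s₂ ≠ 0, and that the defender applies the control law a_D = c λ̇_{DP} − (r_{EP}² D² / (2 ṙ_{EP}² r_{DP}² λ̇_{DP}(ṙ_{DP}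 + 2c))) λ̇_{EP}² − (r_{EP} sin(γ_E − λ_{EP}) D² / (2 ṙ_{EP}² r_{DP}² λ̇_{DP}(ṙ_{DP} + 2c))) a_E + (D² / (2 r_{DP}² λ̇_{DP}(ṙ_{DP} + 2c))) [ (ζ₂|s₂|^{α₂} + ξ₂|s₂|^{β₂})^{κ₂} + sec(γ_D − λ_{DP}) ε₂ ] sign(s₂), with ζ₂, ξ₂, α₂, β₂, κ₂, ε₂ > 0. Then sign(s₂) ṡ₂ = −(ζ₂|s₂|^{α₂} + ξ₂|s₂|^{β₂})^{κ₂} − sec(γ_D − λ_{DP}) ε₂ + Φ a_P sign(s₂), where Φ := (r_{DP}/D²)[ r_{DP} λ̇_{DP}(v_P − v_D cos(γ_P − γ_D)) − 4c² sin(γ_P − λ_{DP}) + (4c + ṙ_{DP}) v_D sin(γ_P − γ_D) ] + r_{EP} sin(γ_P − λ_{EP}) / ṙ_{EP}². (Closed-loop identity underlying Theorem 2.) -/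
/-!
Write `V = ṙ` and `W = r λ̇` for the radial and transversal components of the relative velocity in
polar form. Differentiating the kinematics gives
`V̇ = λ̇ W + (radial relative acceleration)` and
`Ẇ = -λ̇ V + (transversal relative acceleration)`
(`hasDerivAt_radial`, `hasDerivAt_transversal`). The defender's acceleration is directed along the
transversal direction, so it enters only `Ẇ`, with coefficient `-(sin² + cos²) = -1`.

Since `D = V (V + 2c) + W²`, the acceleration-free part of the derivative of
`t_go^{DP} = -r (V + 2c) / D` is `-1 + 2 r² λ̇² c (V + 2c) / D²`, and `a_D` contributes
`-2 r² λ̇ (V + 2c) a_D / D²`. The derivative of `t_go^{EP}` is `-1 + r_{EP} r̈_{EP} / ṙ_{EP}²`.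
The two `-1` cancel in `ṡ₂`, and the control law removes everything except the reaching term and
the part proportional to `a_P`. The latter is brought to the form `Φ a_P` by rotating `(V, W)` into
the pursuer's velocity frame:
`W sin θ + V cos θ = v_P - v_D cos (γ_P - γ_D)` and
`W cos θ - V sin θ = v_D sin (γ_P - γ_D)`, where `θ = γ_P - λ_{DP}`.
-/

/-- Derivative of the radial relative velocity; the transversal component supplies the
centrifugal term `λ̇ (r λ̇)`. -/
lemma hasDerivAt_radial {V lam gP g v : ℝ → ℝ} {vP W lam' gP' g' v' t : ℝ}
    (hV : ∀ t, V t = vP * Real.cos (gP t - lam t) - v t * Real.cos (g t - lam t))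
    (hW : W = vP * Real.sin (gP t - lam t) - v t * Real.sin (g t - lam t))
    (hlam : HasDerivAt lam lam' t) (hgP : HasDerivAt gP gP' t) (hg : HasDerivAt g g' t)
    (hv : HasDerivAt v v' t) :
    HasDerivAt V (lam' * W - vP * gP' * Real.sin (gP t - lam t)
      - v' * Real.cos (g t - lam t) + v t * g' * Real.sin (g t - lam t)) t := by
  rw [funext hV]
  have h := ((hgP.sub hlam).cos.const_mul vP).sub (hv.mul (hg.sub hlam).cos)
  refine h.congr_deriv ?_
  simp only [Pi.sub_apply]
  rw [hW]
  ring

/-- Derivative of the transversal relative velocity `W = r λ̇`. -/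
lemma hasDerivAt_transversal {W lam gP g v : ℝ → ℝ} {vP V lam' gP' g' v' t : ℝ}
    (hW : ∀ t, W t = vP * Real.sin (gP t - lam t) - v t * Real.sin (g t - lam t))
    (hV : V = vP * Real.cos (gP t - lam t) - v t * Real.cos (g t - lam t))
    (hlam : HasDerivAt lam lam' t) (hgP : HasDerivAt gP gP' t) (hg : HasDerivAt g g' t)
    (hv : HasDerivAt v v' t) :
    HasDerivAt W (-(lam' * V) + vP * gP' * Real.cos (gP t - lam t)
      - v' * Real.sin (g t - lam t) - v t * g' * Real.cos (g t - lam t)) t := by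
  rw [funext hW]
  have h := ((hgP.sub hlam).sin.const_mul vP).sub (hv.mul (hg.sub hlam).sin)
  refine h.congr_deriv ?_
  simp only [Pi.sub_apply]
  rw [hV]
  ring

/-- Derivative of the time-to-go `-r (V + 2c) / D` of the defender-pursuer pair, for radial and
transversal relative accelerations `l W - aP S` and `-l V + aP C - aD`, where `W = r l`. -/
lemma hasDerivAt_tgoDP {r V W : ℝ → ℝ} {c l aP aD S C t : ℝ}
    (hr : HasDerivAt r (V t) t) (hV : HasDerivAt V (l * W t - aP * S) t)
    (hW : HasDerivAt W (-(l * V t) + aP * C - aD) t) (hWl : W t = r t * l)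
    (hD : V t ^ 2 + W t ^ 2 + 2 * c * V t ≠ 0) :
    HasDerivAt (fun t => -(r t * (V t + 2 * c)) / (V t ^ 2 + W t ^ 2 + 2 * c * V t))
      (-1 + 2 * r t ^ 2 * l * (V t + 2 * c) * (c * l - aD)
          / (V t ^ 2 + W t ^ 2 + 2 * c * V t) ^ 2
        + r t / (V t ^ 2 + W t ^ 2 + 2 * c * V t) ^ 2
          * (W t * (W t * S + V t * C) - 4 * c ^ 2 * S
            + (4 * c + V t) * (W t * C - V t * S)) * aP) t := by
  have h := (hr.mul (hV.add_const (2 * c))).neg.div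
    (((hV.pow 2).add (hW.pow 2)).add (hV.const_mul (2 * c))) hD
  refine h.congr_deriv ?_
  simp only [Pi.add_apply, Pi.mul_apply, Pi.neg_apply, Pi.pow_apply]
  generalize hQ : V t ^ 2 + W t ^ 2 + 2 * c * V t = Q at hD ⊢
  field_simp
  rw [← hQ, hWl]
  ring

/- Closed-loop identity underlying Theorem 2: under the defender's control law (with
access to the evader's maneuver), sign(s₂) ṡ₂ = −(ζ₂|s₂|^{α₂} + ξ₂|s₂|^{β₂})^{κ₂}
− sec(γ_D − λ_{DP}) ε₂ + Φ a_P sign(s₂). -/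
theorem defender_closed_loop_identity
    (γE γP γD vD rEP lamEP rDP lamDP aE aP aD : ℝ → ℝ)
    (vE vP c τ ζ₂ ξ₂ α₂ β₂ κ₂ ε₂ : ℝ)
    (hvE : 0 < vE) (hvP : 0 < vP) (hvDpos : ∀ t, 0 < vD t)
    (hrEPpos : ∀ t, 0 < rEP t) (hrDPpos : ∀ t, 0 < rDP t)
    (hζ : 0 < ζ₂) (hξ : 0 < ξ₂) (hα : 0 < α₂) (hβ : 0 < β₂) (hκ : 0 < κ₂)
    (hε : 0 < ε₂)
    -- sufficient smoothness
    (hγE : Differentiable ℝ γE) (hγP : Differentiable ℝ γP)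
    (hγD : Differentiable ℝ γD) (hvD : Differentiable ℝ vD)
    (hrEP : Differentiable ℝ rEP) (hlamEP : Differentiable ℝ lamEP)
    (hrDP : Differentiable ℝ rDP) (hlamDP : Differentiable ℝ lamDP)
    (hrEP' : Differentiable ℝ (deriv rEP)) (hlamEP' : Differentiable ℝ (deriv lamEP))
    (hrDP' : Differentiable ℝ (deriv rDP)) (hlamDP' : Differentiable ℝ (deriv lamDP))
    -- evader–pursuer kinematics
    (hkin_rEP : ∀ t, deriv rEP t =
      vP * Real.cos (γP t - lamEP t) - vE * Real.cos (γE t - lamEP t))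
    (hkin_lamEP : ∀ t, rEP t * deriv lamEP t =
      vP * Real.sin (γP t - lamEP t) - vE * Real.sin (γE t - lamEP t))
    -- defender–pursuer kinematics
    (hkin_rDP : ∀ t, deriv rDP t =
      vP * Real.cos (γP t - lamDP t) - vD t * Real.cos (γD t - lamDP t))
    (hkin_lamDP : ∀ t, rDP t * deriv lamDP t =
      vP * Real.sin (γP t - lamDP t) - vD t * Real.sin (γD t - lamDP t))
    -- agent dynamics
    (hdynE : ∀ t, deriv γE t = aE t / vE)
    (hdynP : ∀ t, deriv γP t = aP t / vP)
    (hdynD : ∀ t, deriv γD t = aD t * Real.cos (γD t - lamDP t) / vD t)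
    (hdynvD : ∀ t, deriv vD t = aD t * Real.sin (γD t - lamDP t))
    -- defined quantities
    (D tgoDP tgoEP s₂ Φ : ℝ → ℝ)
    (hD : ∀ t, D t =
      (deriv rDP t) ^ 2 + (rDP t) ^ 2 * (deriv lamDP t) ^ 2 + 2 * c * deriv rDP t)
    (htgoDP : ∀ t, tgoDP t = -(rDP t * (deriv rDP t + 2 * c)) / D t)
    (htgoEP : ∀ t, tgoEP t = -(rEP t) / deriv rEP t)
    (hs₂ : ∀ t, s₂ t = tgoDP t - tgoEP t + τ)
    (hΦ : ∀ t, Φ t =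
      (rDP t / (D t) ^ 2) *
          (rDP t * deriv lamDP t * (vP - vD t * Real.cos (γP t - γD t))
            - 4 * c ^ 2 * Real.sin (γP t - lamDP t)
            + (4 * c + deriv rDP t) * vD t * Real.sin (γP t - γD t))
        + rEP t * Real.sin (γP t - lamEP t) / (deriv rEP t) ^ 2)
    -- nondegeneracy
    (hne1 : ∀ t, deriv rEP t ≠ 0) (hne2 : ∀ t, deriv lamDP t ≠ 0)
    (hne3 : ∀ t, deriv rDP t + 2 * c ≠ 0) (hne4 : ∀ t, D t ≠ 0)
    (hne5 : ∀ t, s₂ t ≠ 0)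
    -- defender's control law
    (hlaw : ∀ t, aD t = c * deriv lamDP t
      - (rEP t) ^ 2 * (D t) ^ 2 /
          (2 * (deriv rEP t) ^ 2 * (rDP t) ^ 2 * deriv lamDP t * (deriv rDP t + 2 * c))
          * (deriv lamEP t) ^ 2
      - rEP t * Real.sin (γE t - lamEP t) * (D t) ^ 2 /
          (2 * (deriv rEP t) ^ 2 * (rDP t) ^ 2 * deriv lamDP t * (deriv rDP t + 2 * c))
          * aE t
      + (D t) ^ 2 / (2 * (rDP t) ^ 2 * deriv lamDP t * (deriv rDP t + 2 * c)) *
          (((ζ₂ * |s₂ t| ^ α₂ + ξ₂ * |s₂ t| ^ β₂) ^ κ₂ +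
              ε₂ / Real.cos (γD t - lamDP t)) * Real.sign (s₂ t))) :
    ∀ t, Real.sign (s₂ t) * deriv s₂ t =
      -(ζ₂ * |s₂ t| ^ α₂ + ξ₂ * |s₂ t| ^ β₂) ^ κ₂
        - ε₂ / Real.cos (γD t - lamDP t)
        + Φ t * aP t * Real.sign (s₂ t) := by
  intro t
  have hθ : γP t - γD t = (γP t - lamDP t) - (γD t - lamDP t) := by ring
  have hPt := (hγP t).hasDerivAt
  have hDt := (hγD t).hasDerivAt
  have hVEP := hasDerivAt_radial hkin_rEP (hkin_lamEP t) (hlamEP t).hasDerivAt hPt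
    (hγE t).hasDerivAt (hasDerivAt_const t vE)
  have hVDP := hasDerivAt_radial hkin_rDP (hkin_lamDP t) (hlamDP t).hasDerivAt hPt hDt
    (hvD t).hasDerivAt
  have hWDP := hasDerivAt_transversal (W := fun t => rDP t * deriv lamDP t) hkin_lamDP
    (hkin_rDP t) (hlamDP t).hasDerivAt hPt hDt (hvD t).hasDerivAt
  have hvD0 : vD t ≠ 0 := (hvDpos t).ne'
  have hcsP : vP * deriv γP t = aP t := by rw [hdynP]; field_simp
  have hcsE : vE * deriv γE t = aE t := by rw [hdynE]; field_simp
  have hcsD : vD t * deriv γD t = aD t * Real.cos (γD t - lamDP t) := by rw [hdynD]; field_simp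
  rw [hcsP, hcsE] at hVEP
  rw [hcsP, hcsD, hdynvD] at hVDP hWDP
  have hsc := Real.sin_sq_add_cos_sq (γD t - lamDP t)
  have hscP := Real.sin_sq_add_cos_sq (γP t - lamDP t)
  have hVDP' := hVDP.congr_deriv (g' := deriv lamDP t * (rDP t * deriv lamDP t)
    - aP t * Real.sin (γP t - lamDP t)) (by ring)
  have hWDP' := hWDP.congr_deriv (g' := -(deriv lamDP t * deriv rDP t)
    + aP t * Real.cos (γP t - lamDP t) - aD t) (by linear_combination (-aD t) * hsc)
  have hDeq : ∀ t, deriv rDP t ^ 2 + (rDP t * deriv lamDP t) ^ 2 + 2 * c * deriv rDP t = D t :=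
    fun t => by rw [hD]; ring
  have hgoDP := hasDerivAt_tgoDP (c := c) (hrDP t).hasDerivAt hVDP' hWDP' rfl
    (by simpa only [hDeq] using hne4 t)
  simp only [hDeq] at hgoDP
  have hgoEP := (hrEP t).hasDerivAt.neg.div hVEP (hne1 t)
  -- The components of the defender-pursuer relative velocity along and across the pursuer's heading.
  have hrot1 : rDP t * deriv lamDP t * Real.sin (γP t - lamDP t)
      + deriv rDP t * Real.cos (γP t - lamDP t) = vP - vD t * Real.cos (γP t - γD t) := by
    rw [hθ, Real.cos_sub (γP t - lamDP t) (γD t - lamDP t), hkin_lamDP, hkin_rDP]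
    linear_combination vP * hscP
  have hrot2 : rDP t * deriv lamDP t * Real.cos (γP t - lamDP t)
      - deriv rDP t * Real.sin (γP t - lamDP t) = vD t * Real.sin (γP t - γD t) := by
    rw [hθ, Real.sin_sub (γP t - lamDP t) (γD t - lamDP t), hkin_lamDP, hkin_rDP]
    ring
  rw [hrot1, hrot2] at hgoDP
  have hs : s₂ = fun t => -(rDP t * (deriv rDP t + 2 * c)) / D t - -(rEP t) / deriv rEP t + τ := by
    funext t
    rw [hs₂, htgoDP, htgoEP]
  have hder := ((hgoDP.sub hgoEP).add_const τ).deriv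
  have hsd : deriv s₂ t = _ := (congrArg (fun f => deriv f t) hs).trans hder
  have hsgn : Real.sign (s₂ t) ^ 2 = 1 := by
    rcases Real.sign_apply_eq_of_ne_zero _ (hne5 t) with h | h <;> rw [h] <;> norm_num
  have hr0 := (hrDPpos t).ne'
  have h1 := hne1 t
  have h2 := hne2 t
  have h3 := hne3 t
  have h4 := hne4 t
  -- The control law, solved for the contribution of `a_D` to the derivative of `t_go^{DP}`.
  have hlaw' : 2 * rDP t ^ 2 * deriv lamDP t * (deriv rDP t + 2 * c) * (c * deriv lamDP t - aD t)
        / D t ^ 2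
      = rEP t ^ 2 * deriv lamEP t ^ 2 / deriv rEP t ^ 2
        + rEP t * Real.sin (γE t - lamEP t) * aE t / deriv rEP t ^ 2
        - ((ζ₂ * |s₂ t| ^ α₂ + ξ₂ * |s₂ t| ^ β₂) ^ κ₂ + ε₂ / Real.cos (γD t - lamDP t))
          * Real.sign (s₂ t) := by
    rw [hlaw]
    -- The reaching term is opaque here; its `cos` may vanish, so it must not be cleared.
    generalize ((ζ₂ * |s₂ t| ^ α₂ + ξ₂ * |s₂ t| ^ β₂) ^ κ₂
      + ε₂ / Real.cos (γD t - lamDP t)) * Real.sign (s₂ t) = X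
    field_simp
    ring
  rw [hlaw'] at hsd
  have hs' : deriv s₂ t = -(((ζ₂ * |s₂ t| ^ α₂ + ξ₂ * |s₂ t| ^ β₂) ^ κ₂
      + ε₂ / Real.cos (γD t - lamDP t)) * Real.sign (s₂ t)) + Φ t * aP t := by
    rw [hsd, hΦ]
    generalize ((ζ₂ * |s₂ t| ^ α₂ + ξ₂ * |s₂ t| ^ β₂) ^ κ₂
      + ε₂ / Real.cos (γD t - lamDP t)) * Real.sign (s₂ t) = X
    simp only [Pi.neg_apply]
    field_simp
    ring
  rw [hs']
  linear_combination (-((ζ₂ * |s₂ t| ^ α₂ + ξ₂ * |s₂ t| ^ β₂) ^ κ₂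
    + ε₂ / Real.cos (γD t - lamDP t))) * hsgn
end
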